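/- arXiv:math/9910123 — 7 statements merged into one kernel-verified Lean document; each statement's English description precedes it below -/
import Mathlib

section
/- For every positive integer n there exists a real number δ > 0 (depending only on n) such that for all positive integers a₁, …, aₙ exactly one of the following holds: ∑_{i=1}^n 1/aᵢ ≤ 1 − δ, or ∑_{i=1}^n 1/aᵢ ≥ 1. In other words, the value 1 is not an accumulation point from below of sums of n unit fractions. -/
/-!
By Dickson's lemma, `Fin n → ℕ` is well quasi-ordered under the pointwise order. The defect
`1 - ∑ 1/aᵢ` is monotone in `a` on tuples of positive integers, so the set of its values is
partially well-ordered, hence well-founded as a set of reals. Its positive elements therefore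
have a least one (if there are any), and this least positive defect serves as `δ`.
-/

/-- For every positive integer `n` there is a `δ > 0` such that for all positive
integers `a₁, …, aₙ` exactly one of `∑ 1/aᵢ ≤ 1 - δ` or `∑ 1/aᵢ ≥ 1` holds. -/
theorem unit_fraction_gap (n : ℕ) (hn : 0 < n) :
    ∃ δ : ℝ, 0 < δ ∧ ∀ a : Fin n → ℕ, (∀ i, 0 < a i) →
      Xor' ((∑ i, (1 : ℝ) / (a i : ℝ)) ≤ 1 - δ)
           (1 ≤ ∑ i, (1 : ℝ) / (a i : ℝ)) := by
  let f : (Fin n → ℕ) → ℝ := fun a => 1 - ∑ i, (1 : ℝ) / (a i : ℝ)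
  let P : Set (Fin n → ℕ) := {a | ∀ i, 0 < a i}
  -- Positivity matters here: with `1 / 0 = 0`, monotonicity fails at tuples with a zero entry.
  have hf : MonotoneOn f P := by
    intro a ha b _ hab
    refine sub_le_sub_left (Finset.sum_le_sum fun i _ => ?_) 1
    exact one_div_le_one_div_of_le (Nat.cast_pos.2 (ha i)) (Nat.cast_le.2 (hab i))
  have hwf : (f '' P ∩ Set.Ioi 0).IsWF :=
    (((Set.isPWO_of_wellQuasiOrderedLE P).image_of_monotoneOn hf).mono
      Set.inter_subset_left).isWF
  obtain ⟨δ, hδ, hmin⟩ : ∃ δ : ℝ, 0 < δ ∧ ∀ x ∈ f '' P ∩ Set.Ioi 0, δ ≤ x := by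
    rcases (f '' P ∩ Set.Ioi 0).eq_empty_or_nonempty with he | hne
    · exact ⟨1, one_pos, by simp [he]⟩
    · exact ⟨hwf.min hne, (hwf.min_mem hne).2, fun x hx => hwf.min_le hne hx⟩
  refine ⟨δ, hδ, fun a ha => ?_⟩
  rcases le_or_gt 1 (∑ i, (1 : ℝ) / (a i : ℝ)) with h | h
  · exact Or.inr ⟨h, by linarith⟩
  · have := hmin (f a) ⟨⟨a, ha, rfl⟩, sub_pos.2 h⟩
    exact Or.inl ⟨le_sub_comm.1 this, not_le.2 h⟩
end

section
/- If a₁, a₂, a₃ are positive integers with 1/a₁ + 1/a₂ + 1/a₃ < 1, then 1/a₁ + 1/a₂ + 1/a₃ ≤ 1 − 1/42 = 41/42. (The optimal gap constant for three unit fractions below 1 is δ(3) = 1/42.) -/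
/-- The ordered case; `a = 1` and `a = b = 2` already give a sum above `1`. If `a ≥ 4` the sum is
at most `3/4`. If `a = 3`, then either `b ≥ 4` and the sum is at most `5/6`, or `b = 3`, which forces `c ≥ 4` and a sum of at most `11/12`. If `a = 2`, then
`b ≥ 5` gives at most `9/10`, `b = 4` forces `c ≥ 5` and at most `19/20`, and `b = 3` forces `c ≥ 7`
and at most the extremal value `1/2 + 1/3 + 1/7 = 41/42`. -/
theorem unit_fraction_gap_three_of_le (a b c : ℕ) (ha : 0 < a) (hab : a ≤ b) (hbc : b ≤ c)
    (h : (1 : ℚ) / a + 1 / b + 1 / c < 1) : (1 : ℚ) / a + 1 / b + 1 / c ≤ 1 - 1 / 42 := by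
  have anti : ∀ m n : ℕ, 0 < m → m ≤ n → (1 : ℚ) / n ≤ 1 / m := fun m n hm hmn =>
    one_div_le_one_div_of_le (by exact_mod_cast hm) (by exact_mod_cast hmn)
  have hb : (0 : ℚ) ≤ 1 / b := by positivity
  have hc : (0 : ℚ) < 1 / c := by
    have : 0 < c := by omega
    positivity
  have hcb := anti b c (by omega) hbc
  -- Strictness of `h` is used only through this integrality step: once `a` and `b` are fixed with
  -- `1 - 1 / a - 1 / b = 1 / k`, it gives `c ≥ k + 1`.
  have lower : ∀ k : ℕ, (1 : ℚ) / c < 1 / k → k + 1 ≤ c := fun k hk => by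
    by_contra hlt
    have := anti c k (by omega) (by omega)
    linarith
  by_cases ha4 : 4 ≤ a
  · have h1 := anti 4 a (by norm_num) ha4
    have h2 := anti 4 b (by norm_num) (by omega)
    norm_num at h1 h2 hcb ⊢
    linarith
  obtain rfl | rfl | rfl : a = 1 ∨ a = 2 ∨ a = 3 := by omega
  · push_cast at h
    linarith
  · by_cases hb5 : 5 ≤ b
    · have h2 := anti 5 b (by norm_num) hb5
      norm_num at h2 hcb ⊢
      linarith
    obtain rfl | rfl | rfl : b = 2 ∨ b = 3 ∨ b = 4 := by omega
    · push_cast at h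
      linarith
    · have h3 := anti 7 c (by norm_num) (lower 6 (by push_cast at h ⊢; linarith))
      push_cast at h3 ⊢
      linarith
    · have h3 := anti 5 c (by norm_num) (lower 4 (by push_cast at h ⊢; linarith))
      push_cast at h3 ⊢
      linarith
  · by_cases hb4 : 4 ≤ b
    · have h2 := anti 4 b (by norm_num) hb4
      norm_num at h2 hcb ⊢
      linarith
    obtain rfl : b = 3 := by omega
    have h3 := anti 4 c (by norm_num) (lower 3 (by push_cast at h ⊢; linarith))
    push_cast at h3 ⊢
    linarith

/-- If `a₁, a₂, a₃` are positive integers with `1/a₁ + 1/a₂ + 1/a₃ < 1`,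
then `1/a₁ + 1/a₂ + 1/a₃ ≤ 41/42`. -/
theorem unit_fraction_gap_three (a₁ a₂ a₃ : ℕ) (h₁ : 0 < a₁) (h₂ : 0 < a₂) (h₃ : 0 < a₃)
    (h : (1 : ℚ) / (a₁ : ℚ) + 1 / (a₂ : ℚ) + 1 / (a₃ : ℚ) < 1) :
    (1 : ℚ) / (a₁ : ℚ) + 1 / (a₂ : ℚ) + 1 / (a₃ : ℚ) ≤ 1 - 1/42 := by
  rcases le_total a₁ a₂ with h12 | h12 <;> rcases le_total a₂ a₃ with h23 | h23 <;>
    rcases le_total a₁ a₃ with h13 | h13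
  · linarith [unit_fraction_gap_three_of_le a₁ a₂ a₃ h₁ h12 h23 (by linarith)]
  · linarith [unit_fraction_gap_three_of_le a₁ a₂ a₃ h₁ h12 h23 (by linarith)]
  · linarith [unit_fraction_gap_three_of_le a₁ a₃ a₂ h₁ h13 h23 (by linarith)]
  · linarith [unit_fraction_gap_three_of_le a₃ a₁ a₂ h₃ h13 h12 (by linarith)]
  · linarith [unit_fraction_gap_three_of_le a₂ a₁ a₃ h₂ h12 h13 (by linarith)]
  · linarith [unit_fraction_gap_three_of_le a₂ a₃ a₁ h₂ h23 h13 (by linarith)]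
  · linarith [unit_fraction_gap_three_of_le a₃ a₂ a₁ h₃ h23 h12 (by linarith)]
  · linarith [unit_fraction_gap_three_of_le a₃ a₂ a₁ h₃ h23 h12 (by linarith)]
end

section
/- Let A be a nonempty subset of ℤ≥0ⁿ and let Γ₊(A) be its Newton polyhedron. Then the point 𝟏 = (1,1,…,1) belongs to the topological interior Γ₊(A)⁰ of Γ₊(A) if and only if for every nonzero q ∈ ℝ≥0ⁿ one has inf_{m ∈ A} ⟨q, m⟩ < ⟨q, 𝟏⟩ = ∑_{i=1}^n qᵢ. -/
/-!
The criterion is the supporting hyperplane theorem for the convex set `Γ₊(A)`, which has nonempty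
interior because it contains a translated orthant `m + ℝ≥0ⁿ`.

For `q ≥ 0`, the number `inf_{m ∈ A} ⟨q, m⟩` bounds `⟨q, ·⟩` from below on all of `Γ₊(A)`
(`sInf_le_of_mem_newtonPolyhedron`). If `𝟏` is interior, the polyhedron contains a point
`(1 - ε) 𝟏`, where `⟨q, ·⟩` is strictly smaller than at `𝟏`; this gives the inequality.
Conversely, if `𝟏` is not interior, some nonzero functional `f` attains its maximum over
`Γ₊(A) ∪ {𝟏}` at `𝟏`. As `Γ₊(A)` recedes in every direction `eᵢ`, the vector
`q = -(f(e₁), …, f(eₙ))` is nonnegative, and it violates the inequality.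
-/

/-- The Newton polyhedron of a set `A ⊆ ℤ≥0ⁿ`: the convex hull of
`⋃_{m ∈ A} (m + ℝ≥0ⁿ)`. -/
def newtonPolyhedron {n : ℕ} (A : Set (Fin n → ℕ)) : Set (Fin n → ℝ) :=
  convexHull ℝ {x : Fin n → ℝ | ∃ m ∈ A, ∀ i, (m i : ℝ) ≤ x i}

theorem mem_newtonPolyhedron_of_le {n : ℕ} {A : Set (Fin n → ℕ)} {m : Fin n → ℕ} (hm : m ∈ A)
    {x : Fin n → ℝ} (hx : ∀ i, (m i : ℝ) ≤ x i) : x ∈ newtonPolyhedron A :=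
  subset_convexHull ℝ _ ⟨m, hm, hx⟩

theorem interior_newtonPolyhedron_nonempty {n : ℕ} {A : Set (Fin n → ℕ)} (hA : A.Nonempty) :
    (interior (newtonPolyhedron A)).Nonempty := by
  obtain ⟨m, hm⟩ := hA
  have hopen : IsOpen (Set.pi Set.univ fun i : Fin n => Set.Ioi (m i : ℝ)) :=
    isOpen_set_pi Set.finite_univ fun i _ => isOpen_Ioi
  refine ⟨fun i => (m i : ℝ) + 1, interior_maximal (fun x hx => ?_) hopen fun i _ => ?_⟩
  · exact mem_newtonPolyhedron_of_le hm fun i => le_of_lt (hx i trivial)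
  · exact lt_add_one (m i : ℝ)

/-- The half-space `⟨q, x⟩ ≥ inf_{m ∈ A} ⟨q, m⟩` is convex and contains every `m + ℝ≥0ⁿ`, hence
contains the Newton polyhedron. -/
theorem sInf_le_of_mem_newtonPolyhedron {n : ℕ} {A : Set (Fin n → ℕ)} {q : Fin n → ℝ}
    (hq : ∀ i, 0 ≤ q i) {x : Fin n → ℝ} (hx : x ∈ newtonPolyhedron A) :
    sInf ((fun m : Fin n → ℕ => ∑ i, q i * (m i : ℝ)) '' A) ≤ ∑ i, q i * x i := by
  set c := sInf ((fun m : Fin n → ℕ => ∑ i, q i * (m i : ℝ)) '' A)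
  have hlin : IsLinearMap ℝ fun y : Fin n → ℝ => ∑ i, q i * y i :=
    ⟨fun y z => by simp [mul_add, Finset.sum_add_distrib],
      fun a y => by simp [Finset.mul_sum, mul_left_comm]⟩
  refine convexHull_min ?_ (convex_halfSpace_ge hlin c) hx
  rintro y ⟨m, hm, hy⟩
  have hbdd : BddBelow ((fun m : Fin n → ℕ => ∑ i, q i * (m i : ℝ)) '' A) := by
    refine ⟨0, ?_⟩
    rintro _ ⟨k, -, rfl⟩
    exact Finset.sum_nonneg fun i _ => mul_nonneg (hq i) (Nat.cast_nonneg _)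
  exact (csInf_le hbdd ⟨m, hm, rfl⟩).trans
    (Finset.sum_le_sum fun i _ => mul_le_mul_of_nonneg_left (hy i) (hq i))

/-- A functional bounded above on a nonempty Newton polyhedron is nonpositive on the basis
vectors, since these are recession directions of the polyhedron. -/
theorem apply_single_nonpos_of_le {n : ℕ} {A : Set (Fin n → ℕ)} (hA : A.Nonempty)
    {f : StrongDual ℝ (Fin n → ℝ)} {b : ℝ} (hf : ∀ x ∈ newtonPolyhedron A, f x ≤ b) (i : Fin n) :
    f (Pi.single i 1) ≤ 0 := by
  obtain ⟨m, hm⟩ := hA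
  by_contra! hpos
  let v : Fin n → ℝ := fun j => (m j : ℝ)
  have hray : ∀ t : ℝ, 0 ≤ t → f v + t * f (Pi.single i 1) ≤ b := by
    intro t ht
    have hmem : v + t • Pi.single i (1 : ℝ) ∈ newtonPolyhedron A := by
      refine mem_newtonPolyhedron_of_le hm fun j => ?_
      have hj : 0 ≤ (Pi.single i (1 : ℝ) : Fin n → ℝ) j :=
        (Pi.single_nonneg.2 zero_le_one : (0 : Fin n → ℝ) ≤ Pi.single i 1) j
      simpa [v] using mul_nonneg ht hj
    simpa using hf _ hmem
  have h0 := hray 0 le_rfl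
  have h1 := hray ((b - f v + 1) / f (Pi.single i 1)) (div_nonneg (by linarith) hpos.le)
  rw [div_mul_cancel₀ _ hpos.ne'] at h1
  linarith

/-- `𝟏 ∈ Γ₊(A)⁰` iff for every nonzero `q ∈ ℝ≥0ⁿ` one has
`inf_{m ∈ A} ⟨q, m⟩ < ∑ qᵢ`. -/
theorem one_mem_interior_newtonPolyhedron_iff {n : ℕ} (A : Set (Fin n → ℕ))
    (hA : A.Nonempty) :
    (fun _ => (1 : ℝ)) ∈ interior (newtonPolyhedron A) ↔
      ∀ q : Fin n → ℝ, (∀ i, 0 ≤ q i) → q ≠ 0 →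
        sInf ((fun m : Fin n → ℕ => ∑ i, q i * (m i : ℝ)) '' A) < ∑ i, q i := by
  constructor
  · intro h q hq hq0
    have hpos : 0 < ∑ i, q i := by
      obtain ⟨i, hi⟩ := Function.ne_iff.1 hq0
      exact Finset.sum_pos' (fun j _ => hq j)
        ⟨i, Finset.mem_univ i, lt_of_le_of_ne (hq i) (Ne.symm hi)⟩
    -- The diagonal `t ↦ (t, …, t)` stays in the polyhedron for `t` slightly below `1`.
    have hcont : Continuous fun t : ℝ => (fun _ => t : Fin n → ℝ) := by fun_prop
    have hev : ∀ᶠ t in nhds (1 : ℝ), (fun _ => t : Fin n → ℝ) ∈ newtonPolyhedron A :=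
      hcont.continuousAt.eventually_mem (mem_interior_iff_mem_nhds.1 h)
    obtain ⟨t, ht1, ht⟩ := hev.exists_lt
    have hle := sInf_le_of_mem_newtonPolyhedron hq ht
    rw [← Finset.sum_mul] at hle
    nlinarith
  · intro h
    by_contra hone
    obtain ⟨f, hf0, hf⟩ := geometric_hahn_banach_of_nonempty_interior_point
      (convex_convexHull ℝ _) hone (interior_newtonPolyhedron_nonempty hA)
    have hfx : ∀ x : Fin n → ℝ, f x = ∑ i, x i * f (Pi.single i 1) := fun x => by
      have he : ∀ i, (fun j => if i = j then (1 : ℝ) else 0) = (Pi.single i 1 : Fin n → ℝ) :=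
        fun i => funext fun j => by simp [Pi.single_apply, eq_comm]
      simpa [he] using f.toLinearMap.pi_apply_eq_sum_univ x
    refine absurd (h (fun i => -f (Pi.single i 1))
      (fun i => neg_nonneg.2 (apply_single_nonpos_of_le hA hf i)) ?_) (not_lt.2 ?_)
    · intro hq
      refine hf0 (ContinuousLinearMap.ext fun x => ?_)
      rw [hfx]
      exact Finset.sum_eq_zero fun i _ => by simp [neg_eq_zero.1 (congrFun hq i)]
    · refine le_csInf (hA.image _) ?_
      rintro _ ⟨m, hm, rfl⟩
      have hm1 := hf (fun i => (m i : ℝ)) (mem_newtonPolyhedron_of_le hm fun _ => le_rfl)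
      rw [hfx, hfx] at hm1
      simpa [mul_comm] using hm1
end

section
/- Let A be a nonempty subset of ℤ≥0ⁿ whose Newton polyhedron Γ₊(A) contains the point 𝟏 = (1,…,1) in its interior. Then there exists a weight p ∈ ℤ>0ⁿ (a vector of positive integers) such that 𝟏 lies in the interior of the Newton polyhedron Γ₊(A_p) of the set A_p = {m ∈ A : ⟨p, m⟩ = min_{m' ∈ A} ⟨p, m'⟩} of minimizers of the linear functional ⟨p, ·⟩ on A. -/
/-- The set of minimizers of the linear functional `⟨p, ·⟩` on `A`
(the support of the leading term `f_p`). -/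
def minimizers {n : ℕ} (A : Set (Fin n → ℕ)) (p : Fin n → ℕ) : Set (Fin n → ℕ) :=
  {m ∈ A | ∀ m' ∈ A, ∑ i, p i * m i ≤ ∑ i, p i * m' i}

/-- The inclusion of lattice points in real space. -/
def latticeCast {n : ℕ} (m : Fin n → ℕ) : Fin n → ℝ := fun i => (m i : ℝ)

/-- Dickson's lemma. -/
lemma exists_finset_dominating {n : ℕ} (A : Set (Fin n → ℕ)) :
    ∃ B : Finset (Fin n → ℕ), (∀ b ∈ B, b ∈ A) ∧ ∀ a ∈ A, ∃ b ∈ B, b ≤ a := by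
  have hfin : {x | Minimal (· ∈ A) x}.Finite :=
    WellQuasiOrderedLE.finite_of_isAntichain (setOfPred_minimal_antichain _)
  refine ⟨hfin.toFinset, fun b hb => ?_, fun a ha => ?_⟩
  · rw [Set.Finite.mem_toFinset] at hb
    exact hb.1
  · obtain ⟨b, hba, hb⟩ := exists_minimal_le_of_wellFoundedLT (· ∈ A) a ha
    exact ⟨b, by rw [Set.Finite.mem_toFinset]; exact hb, hba⟩

lemma exists_le_of_mem_newtonPolyhedron {n : ℕ} {A : Set (Fin n → ℕ)} {B : Finset (Fin n → ℕ)}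
    (hB : ∀ a ∈ A, ∃ b ∈ B, b ≤ a) {x : Fin n → ℝ} (hx : x ∈ newtonPolyhedron A) :
    ∃ y ∈ convexHull ℝ (latticeCast '' (B : Set (Fin n → ℕ))), y ≤ x := by
  have hconv : Convex ℝ
      {x : Fin n → ℝ | ∃ y ∈ convexHull ℝ (latticeCast '' (B : Set (Fin n → ℕ))), y ≤ x} := by
    rintro x ⟨y, hy, hyx⟩ x' ⟨y', hy', hyx'⟩ a b ha hb hab
    refine ⟨a • y + b • y', convex_convexHull ℝ _ hy hy' ha hb hab, ?_⟩
    gcongr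
  refine convexHull_min ?_ hconv hx
  rintro z ⟨m, hm, hmz⟩
  obtain ⟨b, hb, hbm⟩ := hB m hm
  refine ⟨latticeCast b, subset_convexHull ℝ _ ⟨b, hb, rfl⟩, fun i => le_trans ?_ (hmz i)⟩
  exact Nat.cast_le.2 (hbm i)

lemma mem_newtonPolyhedron_of_le_s6 {n : ℕ} {A : Set (Fin n → ℕ)} {x y : Fin n → ℝ}
    (hy : y ∈ convexHull ℝ (latticeCast '' A)) (hyx : y ≤ x) : x ∈ newtonPolyhedron A := by
  have hconv : Convex ℝ {z : Fin n → ℝ | z + (x - y) ∈ newtonPolyhedron A} := by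
    intro z hz z' hz' a b ha hb hab
    have := convex_convexHull ℝ _ hz hz' ha hb hab
    have e : a • z + b • z' + (x - y) = a • (z + (x - y)) + b • (z' + (x - y)) := by
      have : (x - y) = (a + b) • (x - y) := by rw [hab, one_smul]
      conv_lhs => rw [this]
      module
    show a • z + b • z' + (x - y) ∈ newtonPolyhedron A
    rw [e]
    exact this
  have h := convexHull_min (s := latticeCast '' A) ?_ hconv hy
  · have h' : y + (x - y) ∈ newtonPolyhedron A := h
    rwa [add_sub_cancel] at h'
  · rintro _ ⟨m, hm, rfl⟩
    refine subset_convexHull ℝ _ ⟨m, hm, fun i => ?_⟩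
    have := hyx i
    simp only [Pi.add_apply, Pi.sub_apply, latticeCast]
    linarith

lemma mem_interior_newtonPolyhedron {n : ℕ} {A : Set (Fin n → ℕ)} {x y : Fin n → ℝ}
    (hy : y ∈ convexHull ℝ (latticeCast '' A)) (hyx : ∀ i, y i < x i) :
    x ∈ interior (newtonPolyhedron A) := by
  have hopen : IsOpen {z : Fin n → ℝ | ∀ i, y i < z i} := by
    simp only [Set.ofPred_forall]
    exact isOpen_iInter_of_finite fun i => isOpen_lt continuous_const (continuous_apply i)
  exact interior_maximal (fun z hz => mem_newtonPolyhedron_of_le_s6 hy fun i => (hz i).le) hopen hyx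

lemma exists_sub_mem {n : ℕ} {S : Set (Fin n → ℝ)} (h : (fun _ => (1 : ℝ)) ∈ interior S) :
    ∃ ε : ℝ, 0 < ε ∧ (fun _ => 1 - ε) ∈ S := by
  have hc : Continuous fun ε : ℝ => (fun _ : Fin n => 1 - ε) := by fun_prop
  have h0 : (fun ε : ℝ => (fun _ : Fin n => 1 - ε)) ⁻¹' interior S ∈ nhds (0 : ℝ) :=
    (isOpen_interior.preimage hc).mem_nhds (by simpa using h)
  obtain ⟨δ, hδ, hs⟩ := Metric.mem_nhds_iff.1 h0
  have hmem : δ / 2 ∈ Metric.ball (0 : ℝ) δ := by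
    rw [Metric.mem_ball, Real.dist_eq, sub_zero, abs_of_pos (by positivity)]
    linarith
  exact ⟨δ / 2, by positivity, interior_subset (hs hmem)⟩

/-- A compact convex set `C` with a point strictly below `b` has a point `y ≤ b` which minimises, over
`C`, a linear functional with positive coefficients. -/
lemma exists_real_weight {n : ℕ} {C : Set (Fin n → ℝ)} (hC : Convex ℝ C) (hK : IsCompact C)
    {b m : Fin n → ℝ} (hm : m ∈ C) (hmb : ∀ i, m i < b i) :
    ∃ q : Fin n → ℝ, (∀ i, 0 < q i) ∧ ∃ y ∈ C, y ≤ b ∧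
      ∀ x ∈ C, ∑ i, q i * y i ≤ ∑ i, q i * x i := by
  obtain ⟨y, ⟨hyC, hyb⟩, hy⟩ := (hK.inter_right (isClosed_Iic (a := b))).exists_isMinOn
    ⟨m, hm, fun i => (hmb i).le⟩ (f := fun x => ∑ i, x i) (by fun_prop)
  have hyb : y ≤ b := hyb
  have hy : ∀ x ∈ C, x ≤ b → ∑ i, y i ≤ ∑ i, x i := fun x hx hxb => hy ⟨hx, hxb⟩
  set S : Set ((Fin n → ℝ) × ℝ) := {z | ∃ x ∈ C, (∀ i, x i < z.1 i) ∧ ∑ i, x i < z.2} with hS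
  have hSo : IsOpen S := by
    have : S = ⋃ x ∈ C, {z : (Fin n → ℝ) × ℝ | (∀ i, x i < z.1 i) ∧ ∑ i, x i < z.2} := by
      ext z
      simp only [hS, Set.mem_ofPred_eq, Set.mem_iUnion, exists_prop]
    rw [this]
    refine isOpen_biUnion fun x _ => IsOpen.and ?_ (isOpen_lt continuous_const continuous_snd)
    simp only [Set.ofPred_forall]
    exact isOpen_iInter_of_finite fun i => isOpen_lt continuous_const (by fun_prop)
  have hSc : Convex ℝ S := by
    rw [convex_iff_forall_pos]
    rintro z ⟨x, hx, h1, h2⟩ z' ⟨x', hx', h1', h2'⟩ a c ha hc hac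
    refine ⟨a • x + c • x', hC hx hx' ha.le hc.le hac, fun i => ?_, ?_⟩
    · have := mul_lt_mul_of_pos_left (h1 i) ha
      have := mul_lt_mul_of_pos_left (h1' i) hc
      simp only [Pi.add_apply, Pi.smul_apply, smul_eq_mul, Prod.fst_add, Prod.smul_fst]
      linarith
    · have := mul_lt_mul_of_pos_left h2 ha
      have := mul_lt_mul_of_pos_left h2' hc
      simp only [Pi.add_apply, Pi.smul_apply, smul_eq_mul, Prod.snd_add, Prod.smul_snd,
        Finset.sum_add_distrib, ← Finset.mul_sum]
      linarith
  have hnot : (b, ∑ i, y i) ∉ S := by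
    rintro ⟨x, hx, h1, h2⟩
    exact absurd (hy x hx fun i => (h1 i).le) (not_le.2 h2)
  obtain ⟨f, hf⟩ := geometric_hahn_banach_point_open hSc hSo hnot
  set l : Fin n → ℝ := fun i => f (fun j => if i = j then 1 else 0, 0) with hl
  set t : ℝ := f (0, 1) with ht
  have hfe : ∀ (v : Fin n → ℝ) (s : ℝ), f (v, s) = ∑ i, v i * l i + s * t := by
    intro v s
    have h1 : f (v, s) = f (v, 0) + f (0, s) := by rw [← map_add]; simp
    have h2 : f (0, s) = s * t := by
      rw [ht, ← smul_eq_mul, ← map_smul]; simp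
    have h3 := LinearMap.pi_apply_eq_sum_univ
      (f.toLinearMap ∘ₗ LinearMap.inl ℝ (Fin n → ℝ) ℝ) v
    simp only [LinearMap.comp_apply, LinearMap.inl_apply, smul_eq_mul] at h3
    rw [h1, h2]
    congr 1
  have htpos : 0 < t := by
    have h := hf (b, max (∑ i, y i) (∑ i, m i) + 1)
      ⟨m, hm, hmb, lt_of_le_of_lt (le_max_right _ _) (lt_add_one _)⟩
    rw [hfe, hfe] at h
    have hmx := le_max_left (∑ i, y i) (∑ i, m i)
    by_contra hcon
    push Not at hcon
    nlinarith
  -- Moving a point of `S` far in a coordinate direction forces the multiplier to be nonnegative.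
  have hlpos : ∀ i, 0 ≤ l i := by
    intro i
    by_contra hcon
    push Not at hcon
    set T : ℝ := max (∑ j, y j) (∑ j, m j) + 1 with hT
    have hTm : ∑ j, m j < T := lt_of_le_of_lt (le_max_right _ _) (lt_add_one _)
    have hTy : ∑ j, y j < T := lt_of_le_of_lt (le_max_left _ _) (lt_add_one _)
    have hl0 : -l i ≠ 0 := (neg_pos.2 hcon).ne'
    have hR : 0 ≤ (T - ∑ j, y j) * t / (-l i) :=
      div_nonneg (mul_nonneg (by linarith) htpos.le) (by linarith)
    set R : ℝ := (T - ∑ j, y j) * t / (-l i) with hRd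
    have h := hf (b + Pi.single i R, T) ⟨m, hm, fun j => ?_, hTm⟩
    · rw [hfe, hfe] at h
      have e : ∑ j, (b + Pi.single i R : Fin n → ℝ) j * l j = ∑ j, b j * l j + R * l i := by
        simp [add_mul, Finset.sum_add_distrib, Pi.single_apply]
      rw [e] at h
      have : R * l i = - ((T - ∑ j, y j) * t) := by
        have := div_mul_cancel₀ ((T - ∑ j, y j) * t) hl0
        rw [← hRd] at this
        linarith
      linarith
    · have h0 : 0 ≤ (Pi.single i R : Fin n → ℝ) j := by
        rw [Pi.single_apply]; split_ifs <;> simp [hR]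
      simp only [Pi.add_apply]
      linarith [hmb j]
  refine ⟨fun i => l i + t, fun i => by linarith [hlpos i], y, hyC, hyb, fun x hx => ?_⟩
  have key : ∑ i, b i * l i + (∑ i, y i) * t ≤ ∑ i, x i * l i + (∑ i, x i) * t := by
    rw [← hfe, ← hfe]
    have hc : Continuous fun δ : ℝ => f (fun i => x i + δ, ∑ i, x i + δ) := by fun_prop
    have hlim : Filter.Tendsto (fun δ : ℝ => f (fun i => x i + δ, ∑ i, x i + δ))
        (nhdsWithin 0 (Set.Ioi 0)) (nhds (f (x, ∑ i, x i))) := by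
      have := (hc.tendsto 0).mono_left (nhdsWithin_le_nhds (s := Set.Ioi 0))
      simpa using this
    refine ge_of_tendsto hlim ?_
    filter_upwards [self_mem_nhdsWithin] with δ hδ
    have hδ : 0 < δ := hδ
    exact (hf _ ⟨x, hx, fun i => by simpa using hδ, by simpa using hδ⟩).le
  have hyl : ∑ i, y i * l i ≤ ∑ i, b i * l i :=
    Finset.sum_le_sum fun i _ => mul_le_mul_of_nonneg_right (hyb i) (hlpos i)
  have e : ∀ z : Fin n → ℝ, ∑ i, (l i + t) * z i = ∑ i, z i * l i + (∑ i, z i) * t := by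
    intro z
    rw [Finset.sum_mul, ← Finset.sum_add_distrib]
    exact Finset.sum_congr rfl fun i _ => by ring
  simp only [e]
  linarith

/-- A point of a convex hull at which a linear functional is minimal lies in the convex hull of the
generators at which it is minimal. -/
lemma mem_convexHull_argmin {E : Type*} [AddCommGroup E] [Module ℝ E] (L : E →ₗ[ℝ] ℝ) {s : Set E}
    {y : E} (hy : y ∈ convexHull ℝ s) (hmin : ∀ x ∈ s, L y ≤ L x) :
    y ∈ convexHull ℝ {x ∈ s | L x = L y} := by
  have hconv : Convex ℝ
      {x : E | L y ≤ L x ∧ (L x = L y → x ∈ convexHull ℝ {x ∈ s | L x = L y})} := by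
    rw [convex_iff_forall_pos]
    rintro x ⟨hx, hx'⟩ z ⟨hz, hz'⟩ a b ha hb hab
    have e : L (a • x + b • z) - L y = a * (L x - L y) + b * (L z - L y) := by
      simp only [map_add, map_smul, smul_eq_mul]
      linear_combination L y * hab
    have h1 : 0 ≤ a * (L x - L y) := mul_nonneg ha.le (by linarith)
    have h2 : 0 ≤ b * (L z - L y) := mul_nonneg hb.le (by linarith)
    refine ⟨by linarith, fun h => ?_⟩
    have h3 : a * (L x - L y) = 0 := by linarith
    have h4 : b * (L z - L y) = 0 := by linarith
    have h5 := (mul_eq_zero.1 h3).resolve_left ha.ne'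
    have h6 := (mul_eq_zero.1 h4).resolve_left hb.ne'
    exact convex_convexHull ℝ _ (hx' (by linarith)) (hz' (by linarith)) ha.le hb.le hab
  refine (convexHull_min ?_ hconv hy).2 rfl
  exact fun x hx => ⟨hmin x hx, fun h => subset_convexHull ℝ _ ⟨hx, h⟩⟩

lemma exists_nat_mul_eq {n : ℕ} (r : Fin n → ℚ) (hr : ∀ i, 0 < r i) :
    ∃ N : ℕ, 0 < N ∧ ∃ p : Fin n → ℕ, ∀ i, (p i : ℚ) = N * r i := by
  refine ⟨∏ i, (r i).den, Finset.prod_pos fun i _ => (r i).den_pos, ?_⟩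
  choose k hk using fun i => Finset.dvd_prod_of_mem (fun i => (r i).den) (Finset.mem_univ i)
  refine ⟨fun i => (r i).num.toNat * k i, fun i => ?_⟩
  have h1 : (((r i).num.toNat : ℕ) : ℚ) = (r i).num := by
    exact_mod_cast Int.toNat_of_nonneg (Rat.num_pos.2 (hr i)).le
  rw [hk i]
  push_cast
  rw [h1]
  linear_combination (-(k i : ℚ)) * Rat.mul_den_eq_num (r i)

/-- Finitely many integral linear inequalities with a positive real solution have a positive
integral solution. -/
lemma exists_nat_weight {n : ℕ} (q : Fin n → ℝ) (hq : ∀ i, 0 < q i) (D : Finset (Fin n → ℤ))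
    (hD : ∀ d ∈ D, 0 ≤ ∑ i, q i * d i) :
    ∃ p : Fin n → ℕ, (∀ i, 0 < p i) ∧ ∀ d ∈ D, 0 ≤ ∑ i, (p i : ℤ) * d i := by
  let V := Submodule.span ℚ (Set.range q)
  have : Module.Finite ℚ V := Module.Finite.span_of_finite ℚ (Set.finite_range q)
  let e := Module.finBasis ℚ V
  let v : Fin n → V := fun i => ⟨q i, Submodule.subset_span ⟨i, rfl⟩⟩
  let c : Fin n → Fin (Module.finrank ℚ V) → ℚ := fun i j => e.repr (v i) j
  have hqc : ∀ i, ∑ j, (c i j : ℝ) * (e j : ℝ) = q i := by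
    intro i
    have h := congrArg (Subtype.val) (e.sum_repr (v i))
    simpa only [Submodule.coe_sum, Submodule.coe_smul, Rat.smul_def, c, v] using h
  let U : Set (Fin (Module.finrank ℚ V) → ℝ) :=
    {r | (∀ i, 0 < ∑ j, (c i j : ℝ) * r j) ∧
      ∀ d ∈ D.filter (fun d => 0 < ∑ i, q i * d i), 0 < ∑ i, (∑ j, (c i j : ℝ) * r j) * d i}
  have hU : IsOpen U := by
    refine IsOpen.and ?_ ?_
    · simp only [Set.ofPred_forall]
      exact isOpen_iInter_of_finite fun i => isOpen_lt continuous_const (by fun_prop)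
    · simp only [Set.ofPred_forall]
      exact isOpen_biInter_finset fun d _ => isOpen_lt continuous_const (by fun_prop)
  have hUe : (fun j => (e j : ℝ)) ∈ U := by
    refine ⟨fun i => by rw [hqc]; exact hq i, fun d hd => ?_⟩
    simp only [hqc]
    exact (Finset.mem_filter.1 hd).2
  obtain ⟨r, hr1, hr2⟩ := (DenseRange.piMap fun _ : Fin (Module.finrank ℚ V) =>
    Rat.denseRange_cast (𝕜 := ℝ)).exists_mem_open hU ⟨_, hUe⟩
  simp only [Pi.map_apply] at hr1 hr2
  let s : Fin n → ℚ := fun i => ∑ j, c i j * r j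
  have hs : ∀ i, 0 < s i := fun i => by exact_mod_cast hr1 i
  have hsd : ∀ d ∈ D, 0 ≤ ∑ i, s i * d i := by
    intro d hd
    rcases (hD d hd).lt_or_eq with h | h
    · exact le_of_lt (by exact_mod_cast hr2 d (Finset.mem_filter.2 ⟨hd, h⟩))
    · -- An exact relation among the `q i` holds coordinatewise in the basis.
      have hv : ∑ i, (d i : ℚ) • v i = 0 := by
        apply Subtype.ext
        simp only [v, Submodule.coe_sum, Submodule.coe_smul, Rat.smul_def, Submodule.coe_zero]
        rw [h]
        exact Finset.sum_congr rfl fun i _ => by push_cast; ring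
      have hj : ∀ j, ∑ i, (d i : ℚ) * c i j = 0 := by
        intro j
        have := congrArg (fun w => e.repr w j) hv
        simpa [c, Finsupp.finsetSum_apply] using this
      have : ∑ i, s i * d i = ∑ j, r j * ∑ i, (d i : ℚ) * c i j := by
        simp only [s, Finset.sum_mul, Finset.mul_sum]
        rw [Finset.sum_comm]
        exact Finset.sum_congr rfl fun j _ => Finset.sum_congr rfl fun i _ => by ring
      rw [this]
      simp [hj]
  obtain ⟨N, hN, p, hp⟩ := exists_nat_mul_eq s hs
  have hN' : (0 : ℚ) < N := by exact_mod_cast hN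
  refine ⟨p, fun i => ?_, fun d hd => ?_⟩
  · have : (0 : ℚ) < p i := by rw [hp]; exact mul_pos hN' (hs i)
    exact_mod_cast this
  · have : (0 : ℚ) ≤ ∑ i, (p i : ℚ) * d i := by
      simp only [hp, mul_assoc, ← Finset.mul_sum]
      exact mul_nonneg hN'.le (hsd d hd)
    exact_mod_cast this

/-- If `𝟏` is interior to `Γ₊(A)`, then there is a positive integer weight `p`
with `𝟏` interior to `Γ₊(A_p)`. -/
theorem exists_weight_one_mem_interior {n : ℕ} (A : Set (Fin n → ℕ)) (hA : A.Nonempty)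
    (h1 : (fun _ => (1 : ℝ)) ∈ interior (newtonPolyhedron A)) :
    ∃ p : Fin n → ℕ, (∀ i, 0 < p i) ∧
      (fun _ => (1 : ℝ)) ∈ interior (newtonPolyhedron (minimizers A p)) := by
  classical
  obtain ⟨B, hBA, hB⟩ := exists_finset_dominating A
  obtain ⟨ε, hε, hmem⟩ := exists_sub_mem h1
  obtain ⟨m, hm, hmle⟩ := exists_le_of_mem_newtonPolyhedron hB hmem
  have hK : IsCompact (convexHull ℝ (latticeCast '' (B : Set (Fin n → ℕ)))) :=
    (B.finite_toSet.image _).isCompact_convexHull ℝ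
  obtain ⟨q, hq, y, hyC, hyb, hymin⟩ := exists_real_weight (convex_convexHull ℝ _) hK hm
    (b := fun _ => 1 - ε / 2) (fun i => lt_of_le_of_lt (hmle i) (by linarith))
  let L : (Fin n → ℝ) →ₗ[ℝ] ℝ := ∑ i, q i • LinearMap.proj i
  have hL : ∀ x, L x = ∑ i, q i * x i := fun x => by simp [L]
  have hymem := mem_convexHull_argmin L hyC fun x hx => by
    rw [hL, hL]; exact hymin x (subset_convexHull ℝ _ hx)
  -- The differences `m' - m` whose pairing with `q` is nonnegative.
  let D : Finset (Fin n → ℤ) := ((B ×ˢ B).image fun z i => (z.2 i : ℤ) - z.1 i).filter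
    fun d => 0 ≤ ∑ i, q i * d i
  obtain ⟨p, hp, hpD⟩ := exists_nat_weight q hq D fun d hd => (Finset.mem_filter.1 hd).2
  refine ⟨p, hp, mem_interior_newtonPolyhedron (y := y) ?_ fun i =>
    lt_of_le_of_lt (hyb i) (by linarith)⟩
  refine convexHull_mono ?_ hymem
  rintro _ ⟨⟨k, hk, rfl⟩, hky⟩
  refine ⟨k, ⟨hBA k hk, fun m' hm' => ?_⟩, rfl⟩
  obtain ⟨b, hb, hbm⟩ := hB m' hm'
  have hd : (fun i => (b i : ℤ) - k i) ∈ D := by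
    refine Finset.mem_filter.2 ⟨Finset.mem_image.2 ⟨(k, b), Finset.mk_mem_product hk hb, rfl⟩, ?_⟩
    have h := hymin (latticeCast b) (subset_convexHull ℝ _ ⟨b, hb, rfl⟩)
    rw [← hL, ← hky, hL] at h
    simp only [latticeCast] at h
    push_cast
    simp only [mul_sub, Finset.sum_sub_distrib]
    linarith
  have h := hpD _ hd
  simp only [mul_sub, Finset.sum_sub_distrib] at h
  have h' : ∑ i, p i * k i ≤ ∑ i, p i * b i := by
    zify
    linarith
  exact h'.trans (Finset.sum_le_sum fun i _ => Nat.mul_le_mul_left _ (hbm i))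
end

section
/- Let A be a nonempty subset of ℤ≥0ⁿ. Then the Newton polyhedron of A decomposes as the union over all positive integer weights of the Newton polyhedra of the corresponding minimizer sets: Γ₊(A) = ⋃_{p ∈ ℤ>0ⁿ} Γ₊(A_p), where A_p = {m ∈ A : ⟨p, m⟩ = min_{m' ∈ A} ⟨p, m'⟩}. -/
/-- Farkas' lemma over an ordered field, in any vector space: if `g` is nonnegative wherever
finitely many functionals `f j` are, then `g` is a nonnegative combination of them.
The induction eliminates one functional `f j` by restricting the others to its kernel, along the
projection `x ↦ x + f j x • y` with `f j y = -1`. -/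
lemma farkas {K V ι : Type*} [Field K] [LinearOrder K] [IsStrictOrderedRing K]
    [AddCommGroup V] [Module K V] (s : Finset ι) (f : ι → V →ₗ[K] K) (g : V →ₗ[K] K)
    (h : ∀ x, (∀ j ∈ s, 0 ≤ f j x) → 0 ≤ g x) :
    ∃ c : ι → K, (∀ j, 0 ≤ c j) ∧ ∀ x, g x = ∑ j ∈ s, c j * f j x := by
  classical
  induction s using Finset.induction_on generalizing f g with
  | empty =>
    refine ⟨0, fun _ => le_rfl, fun x => ?_⟩
    have h1 := h x (by simp)
    have h2 := h (-x) (by simp)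
    rw [map_neg] at h2
    simp only [Finset.sum_empty]
    linarith
  | insert j s hj ih =>
    by_cases hs : ∀ x, (∀ k ∈ s, 0 ≤ f k x) → 0 ≤ g x
    · obtain ⟨c, hc, hg⟩ := ih f g hs
      refine ⟨Function.update c j 0, fun k => ?_, fun x => ?_⟩
      · by_cases hk : k = j
        · subst hk; simp
        · simp [hk, hc k]
      · rw [Finset.sum_insert hj, hg x]
        simp only [Function.update_self, zero_mul, zero_add]
        refine Finset.sum_congr rfl fun k hk => ?_
        rw [Function.update_of_ne (ne_of_mem_of_not_mem hk hj)]
    · push Not at hs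
      obtain ⟨x₀, hx₀, hgx₀⟩ := hs
      have hneg : f j x₀ < 0 := by
        by_contra hcon
        push Not at hcon
        have := h x₀ (by
          intro k hk
          rcases Finset.mem_insert.1 hk with rfl | hk
          · exact hcon
          · exact hx₀ k hk)
        linarith
      -- rescale the witness so that `f j` takes the value `-1`
      obtain ⟨y, hy, hgy, hjy⟩ : ∃ y, (∀ k ∈ s, 0 ≤ f k y) ∧ g y < 0 ∧ f j y = -1 := by
        have hpos : 0 < (-f j x₀)⁻¹ := inv_pos.2 (by linarith)
        refine ⟨(-f j x₀)⁻¹ • x₀, fun k hk => ?_, ?_, ?_⟩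
        · rw [map_smul, smul_eq_mul]; exact mul_nonneg hpos.le (hx₀ k hk)
        · rw [map_smul, smul_eq_mul]; exact mul_neg_of_pos_of_neg hpos hgx₀
        · rw [map_smul, smul_eq_mul]
          have := hneg.ne
          field_simp
      obtain ⟨c, hc, hg⟩ := ih (fun k => f k + f k y • f j) (g + g y • f j) (by
        intro x hx
        have := h (x + f j x • y) (by
          intro k hk
          rcases Finset.mem_insert.1 hk with rfl | hk
          · simp [hjy]
          · have := hx k hk
            simp only [LinearMap.add_apply, LinearMap.smul_apply, smul_eq_mul] at this
            simp only [map_add, map_smul, smul_eq_mul]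
            linarith)
        simp only [map_add, map_smul, smul_eq_mul] at this
        simp only [LinearMap.add_apply, LinearMap.smul_apply, smul_eq_mul]
        linarith)
      have hsum : 0 ≤ ∑ k ∈ s, c k * f k y :=
        Finset.sum_nonneg fun k hk => mul_nonneg (hc k) (hy k hk)
      refine ⟨Function.update c j (∑ k ∈ s, c k * f k y - g y), fun k => ?_, fun x => ?_⟩
      · by_cases hk : k = j
        · subst hk; simp only [Function.update_self]; linarith
        · simp [hk, hc k]
      · rw [Finset.sum_insert hj]
        have e1 : ∑ k ∈ s, Function.update c j (∑ k ∈ s, c k * f k y - g y) k * f k x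
            = ∑ k ∈ s, c k * f k x := by
          refine Finset.sum_congr rfl fun k hk => ?_
          rw [Function.update_of_ne (ne_of_mem_of_not_mem hk hj)]
        have e2 := hg x
        simp only [LinearMap.add_apply, LinearMap.smul_apply, smul_eq_mul, mul_add,
          Finset.sum_add_distrib, ← mul_assoc] at e2
        rw [← Finset.sum_mul] at e2
        rw [e1, Function.update_self]
        linarith

/-- If the convex combination of `v` with weights `w` has the least coordinate sum among those
lying below `x`, then no nonnegative combination of the differences `v a - v s` with `w s > 0` is
nonpositive in every coordinate and negative in the `i`-th one. -/
lemma no_descent {n : ℕ} {ι : Type*} [Fintype ι] (v : ι → Fin n → ℝ) (x : Fin n → ℝ)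
    (w : ι → ℝ) (hw : w ∈ stdSimplex ℝ ι) (hx : ∀ k, ∑ a, w a * v a k ≤ x k)
    (hmin : ∀ w' ∈ stdSimplex ℝ ι, (∀ k, ∑ a, w' a * v a k ≤ x k) →
      ∑ k, ∑ a, w a * v a k ≤ ∑ k, ∑ a, w' a * v a k)
    (l : ι → ι → ℝ) (hl : ∀ s a, 0 ≤ l s a) (hl0 : ∀ s a, ¬ 0 < w s → l s a = 0) (i : Fin n)
    (hle : ∀ k, ∑ s, ∑ a, l s a * (v a k - v s k) ≤ 0)
    (hlt : ∑ s, ∑ a, l s a * (v a i - v s i) < 0) : False := by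
  obtain ⟨ε, hε, hεw⟩ : ∃ ε : ℝ, 0 < ε ∧ ∀ a, ε * ∑ b, l a b ≤ w a := by
    have h1 : ∀ᶠ ε : ℝ in nhdsWithin 0 (Set.Ioi 0), ∀ a, ε * ∑ b, l a b ≤ w a := by
      rw [Filter.eventually_all]
      intro a
      by_cases ha : 0 < w a
      · have : Filter.Tendsto (fun ε : ℝ => ε * ∑ b, l a b) (nhdsWithin 0 (Set.Ioi 0))
            (nhds (0 * ∑ b, l a b)) :=
          (Continuous.tendsto (by fun_prop) 0).mono_left nhdsWithin_le_nhds
        rw [zero_mul] at this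
        exact (this.eventually_lt_const ha).mono fun _ h => h.le
      · exact Filter.Eventually.of_forall fun ε => by simp [hl0 a _ ha, hw.1 a]
    obtain ⟨ε, h2, h3⟩ := (h1.and self_mem_nhdsWithin).exists
    exact ⟨ε, h3, h2⟩
  -- the mass `ε * l s a` is transported from `s` to `a`
  have key : ∀ F : ι → ℝ, ∑ a, (w a + ε * (∑ s, l s a - ∑ b, l a b)) * F a
      = ∑ a, w a * F a + ε * ∑ s, ∑ a, l s a * (F a - F s) := by
    intro F
    have e1 : ∑ s, ∑ a, l s a * (F a - F s)
        = ∑ a, (∑ s, l s a) * F a - ∑ a, (∑ b, l a b) * F a := by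
      simp only [mul_sub, Finset.sum_sub_distrib, Finset.sum_mul]
      rw [Finset.sum_comm]
    rw [e1, ← Finset.sum_sub_distrib, Finset.mul_sum, ← Finset.sum_add_distrib]
    exact Finset.sum_congr rfl fun a _ => by ring
  have hw' : (fun a => w a + ε * (∑ s, l s a - ∑ b, l a b)) ∈ stdSimplex ℝ ι := by
    refine ⟨fun a => ?_, ?_⟩
    · have h1 := hεw a
      have h2 : 0 ≤ ε * ∑ s, l s a := mul_nonneg hε.le (Finset.sum_nonneg fun s _ => hl s a)
      simp only [mul_sub]
      linarith
    · have := key fun _ => 1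
      simp only [mul_one, sub_self, mul_zero, Finset.sum_const_zero, add_zero] at this
      rw [this, hw.2]
  have h1 := hmin _ hw' (fun k => by
    rw [key fun a => v a k]
    have := mul_nonpos_of_nonneg_of_nonpos hε.le (hle k)
    linarith [hx k])
  refine absurd h1 (not_le.2 ?_)
  refine Finset.sum_lt_sum (fun k _ => ?_) ⟨i, Finset.mem_univ _, ?_⟩
  · rw [key fun a => v a k]
    have := mul_nonpos_of_nonneg_of_nonpos hε.le (hle k)
    linarith
  · rw [key fun a => v a i]
    have := mul_neg_of_pos_of_neg hε hlt
    linarith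

/-- A nonnegative rational vector becomes integral after multiplication by a positive integer. -/
lemma exists_clear_denominators {n : ℕ} (q : Fin n → ℚ) (hq : ∀ i, 0 ≤ q i) :
    ∃ (N : ℕ) (p : Fin n → ℕ), 0 < N ∧ ∀ i, (p i : ℚ) = N * q i := by
  have hdvd : ∀ i, (q i).den ∣ ∏ j, (q j).den := fun i => Finset.dvd_prod_of_mem _ (by simp)
  choose d hd using hdvd
  refine ⟨∏ j, (q j).den, fun i => d i * (q i).num.toNat,
    Finset.prod_pos fun j _ => (q j).den_pos, fun i => ?_⟩
  rw [hd i]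
  have h1 : (((q i).num.toNat : ℕ) : ℚ) = (q i).num := by
    exact_mod_cast Int.toNat_of_nonneg (Rat.num_nonneg.2 (hq i))
  have h2 := Rat.den_mul_eq_num (q i)
  push_cast
  rw [h1, ← h2]
  ring

/-- Below any point lying above a convex combination of finitely many lattice points `v` there is a
combination whose support consists of minimizers of a common positive integer weight. -/
lemma exists_positive_weight {n : ℕ} {ι : Type*} [Fintype ι] (v : ι → Fin n → ℕ) (x : Fin n → ℝ)
    (hex : ∃ w ∈ stdSimplex ℝ ι, ∀ k, ∑ a, w a * (v a k : ℝ) ≤ x k) :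
    ∃ w ∈ stdSimplex ℝ ι, (∀ k, ∑ a, w a * (v a k : ℝ) ≤ x k) ∧
      ∃ p : Fin n → ℕ, (∀ i, 0 < p i) ∧
        ∀ s, 0 < w s → ∀ a, ∑ i, p i * v s i ≤ ∑ i, p i * v a i := by
  classical
  have hcomp : IsCompact (stdSimplex ℝ ι ∩ {w | ∀ k, ∑ a, w a * (v a k : ℝ) ≤ x k}) := by
    refine (isCompact_stdSimplex ℝ ι).inter_right ?_
    rw [Set.ofPred_forall]
    exact isClosed_iInter fun k => isClosed_le (by fun_prop) (by fun_prop)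
  obtain ⟨w₀, hw₀, hw₀x⟩ := hex
  obtain ⟨w, ⟨hw, hwx⟩, hmin⟩ := hcomp.exists_isMinOn ⟨w₀, hw₀, hw₀x⟩
    (f := fun w => ∑ k, ∑ a, w a * (v a k : ℝ)) (by fun_prop)
  refine ⟨w, hw, hwx, ?_⟩
  have hmin' : ∀ w' ∈ stdSimplex ℝ ι, (∀ k, ∑ a, w' a * (v a k : ℝ) ≤ x k) →
      ∑ k, ∑ a, w a * (v a k : ℝ) ≤ ∑ k, ∑ a, w' a * (v a k : ℝ) :=
    fun w' h1 h2 => hmin ⟨h1, h2⟩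
  have hq : ∀ i : Fin n, ∃ q : Fin n → ℚ, (∀ k, 0 ≤ q k) ∧ 0 < q i ∧
      ∀ s, 0 < w s → ∀ a, ∑ k, q k * (v s k : ℚ) ≤ ∑ k, q k * (v a k : ℚ) := by
    intro i
    by_contra hcon
    push Not at hcon
    let D : ι × ι → (Fin n → ℚ) →ₗ[ℚ] ℚ := fun sa => if 0 < w sa.1 then
      ∑ k, ((v sa.2 k : ℚ) - v sa.1 k) • LinearMap.proj k else 0
    have hD : ∀ s a q, D (s, a) q
        = if 0 < w s then ∑ k, ((v a k : ℚ) - v s k) * q k else 0 := by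
      intro s a q
      by_cases hs : 0 < w s <;> simp [D, hs]
    obtain ⟨c, hc, hg⟩ := farkas (Finset.univ : Finset ((ι × ι) ⊕ Fin n))
      (Sum.elim D fun k => LinearMap.proj k) (-LinearMap.proj i) (by
        intro q hq
        by_contra hlt
        simp only [LinearMap.neg_apply, LinearMap.proj_apply, not_le] at hlt
        obtain ⟨s, hs, a, ha⟩ := hcon q (fun k => by simpa using hq (Sum.inr k) (by simp))
          (by linarith)
        have := hq (Sum.inl (s, a)) (by simp)
        simp only [Sum.elim_inl, hD, hs, if_true, sub_mul, Finset.sum_sub_distrib] at this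
        simp only [mul_comm (q _)] at ha
        linarith)
    -- reading the relation between functionals at the `k`-th unit vector
    have hcoord : ∀ k, ∑ s, ∑ a, (if 0 < w s then c (Sum.inl (s, a)) else 0)
        * ((v a k : ℚ) - v s k) = -(if k = i then 1 else 0) - c (Sum.inr k) := by
      intro k
      have := hg (Pi.single k 1)
      rw [Fintype.sum_sum_type, Fintype.sum_prod_type] at this
      simp only [Sum.elim_inl, Sum.elim_inr, hD, LinearMap.neg_apply, LinearMap.proj_apply,
        Pi.single_apply, mul_ite, mul_one, mul_zero, Finset.sum_ite_eq',
        Finset.mem_univ, if_true, eq_comm (a := i)] at this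
      simp only [ite_mul, zero_mul]
      linarith
    have hcoordR : ∀ k, ∑ s, ∑ a, (if 0 < w s then (c (Sum.inl (s, a)) : ℝ) else 0)
        * ((v a k : ℝ) - v s k) = -(if k = i then 1 else 0) - (c (Sum.inr k) : ℝ) := by
      intro k
      have := congrArg (Rat.cast : ℚ → ℝ) (hcoord k)
      simpa only [Rat.cast_sum, Rat.cast_mul, Rat.cast_sub, Rat.cast_neg, Rat.cast_natCast,
        apply_ite (Rat.cast : ℚ → ℝ), Rat.cast_zero, Rat.cast_one] using this
    have hcR : ∀ j, (0 : ℝ) ≤ c j := fun j => by exact_mod_cast hc j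
    refine no_descent (fun a k => (v a k : ℝ)) x w hw hwx hmin'
      (fun s a => if 0 < w s then (c (Sum.inl (s, a)) : ℝ) else 0) ?_ ?_ i ?_ ?_
    · intro s a
      split_ifs
      · exact hcR _
      · exact le_rfl
    · intro s a hs
      simp [hs]
    · intro k
      rw [hcoordR k]
      have := hcR (Sum.inr k)
      split_ifs <;> linarith
    · rw [hcoordR i]
      have := hcR (Sum.inr i)
      simp only [if_true]
      linarith
  choose q hq0 hqi hqv using hq
  obtain ⟨N, p, hN, hp⟩ := exists_clear_denominators (fun k => ∑ i, q i k)
    (fun k => Finset.sum_nonneg fun i _ => hq0 i k)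
  have hNQ : (0 : ℚ) < N := by exact_mod_cast hN
  refine ⟨p, fun i => ?_, fun s hs a => ?_⟩
  · have : (0 : ℚ) < p i := by
      rw [hp]
      exact mul_pos hNQ (Finset.sum_pos' (fun j _ => hq0 j i) ⟨i, Finset.mem_univ _, hqi i⟩)
    exact_mod_cast this
  · have e : ∀ b, ∑ k, (p k : ℚ) * v b k = N * ∑ i, ∑ k, q i k * v b k := by
      intro b
      rw [Finset.sum_comm, Finset.mul_sum]
      refine Finset.sum_congr rfl fun k _ => ?_
      rw [hp, mul_assoc, Finset.sum_mul]
    have : ∑ k, (p k : ℚ) * v s k ≤ ∑ k, (p k : ℚ) * v a k := by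
      rw [e, e]
      exact mul_le_mul_of_nonneg_left (Finset.sum_le_sum fun i _ => hqv i s hs a) hNQ.le
    exact_mod_cast this

/-- `Γ₊(A) = ⋃_{p ∈ ℤ>0ⁿ} Γ₊(A_p)`. -/
theorem newtonPolyhedron_eq_iUnion_minimizers {n : ℕ} (A : Set (Fin n → ℕ))
    (hA : A.Nonempty) :
    newtonPolyhedron A =
      ⋃ p ∈ {p : Fin n → ℕ | ∀ i, 0 < p i}, newtonPolyhedron (minimizers A p) := by
  classical
  refine Set.Subset.antisymm ?_ (Set.iUnion₂_subset fun p _ =>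
    convexHull_mono fun x ⟨m, hm, hx⟩ => ⟨m, hm.1, hx⟩)
  -- Dickson's lemma
  have hfin : {m | Minimal (· ∈ A) m}.Finite :=
    WellQuasiOrderedLE.finite_of_isAntichain (setOfPred_minimal_antichain _)
  have := hfin.fintype
  have hbelow : ∀ m ∈ A, ∃ a : {m | Minimal (· ∈ A) m}, a.1 ≤ m := by
    intro m hm
    obtain ⟨a, ha, hmin⟩ := exists_minimal_le_of_wellFoundedLT (· ∈ A) m hm
    exact ⟨⟨a, hmin⟩, ha⟩
  intro x hx
  have hsub : newtonPolyhedron A ⊆ {x | ∃ w ∈ stdSimplex ℝ {m | Minimal (· ∈ A) m},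
      ∀ k, ∑ a, w a * (a.1 k : ℝ) ≤ x k} := by
    refine convexHull_min ?_ ?_
    · rintro y ⟨m, hm, hy⟩
      obtain ⟨a, ha⟩ := hbelow m hm
      refine ⟨Pi.single a 1, single_mem_stdSimplex ℝ a, fun k => ?_⟩
      have h1 : (a.1 k : ℝ) ≤ m k := by exact_mod_cast ha k
      simpa [Pi.single_apply] using h1.trans (hy k)
    · rintro y ⟨w, hw, hy⟩ z ⟨u, hu, hz⟩ s t hs ht hst
      refine ⟨s • w + t • u, convex_stdSimplex ℝ _ hw hu hs ht hst, fun k => ?_⟩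
      simp only [Pi.add_apply, Pi.smul_apply, smul_eq_mul, add_mul, Finset.sum_add_distrib,
        mul_assoc, ← Finset.mul_sum]
      exact add_le_add (mul_le_mul_of_nonneg_left (hy k) hs) (mul_le_mul_of_nonneg_left (hz k) ht)
  obtain ⟨w, hw, hwx, p, hp, hmin⟩ := exists_positive_weight
    (fun a : {m | Minimal (· ∈ A) m} => a.1) x (hsub hx)
  refine Set.mem_iUnion₂.2 ⟨p, hp, ?_⟩
  -- `x` is the combination with weights `w` of the translates of the `a` by `x - ∑ w b • b ≥ 0`
  have hrep : ∑ a ∈ Finset.univ.filter (fun a => 0 < w a), w a •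
      (fun k => (a.1 k : ℝ) + (x k - ∑ b, w b * (b.1 k : ℝ))) = x := by
    rw [Finset.sum_filter_of_ne (fun a _ h => (hw.1 a).lt_of_ne fun e => h (by simp [← e]))]
    ext k
    simp only [Finset.sum_apply, Pi.smul_apply, smul_eq_mul, mul_add, Finset.sum_add_distrib,
      ← Finset.sum_mul, hw.2]
    ring
  rw [← hrep]
  refine (convex_convexHull ℝ _).sum_mem (fun a _ => hw.1 a) ?_ fun a ha => subset_convexHull ℝ _ ?_
  · rw [Finset.sum_filter_of_ne (fun a _ h => (hw.1 a).lt_of_ne (Ne.symm h))]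
    exact hw.2
  · refine ⟨a.1, ⟨a.2.1, fun m' hm' => ?_⟩, fun k => ?_⟩
    · obtain ⟨b, hb⟩ := hbelow m' hm'
      exact (hmin a (Finset.mem_filter.1 ha).2 b).trans
        (Finset.sum_le_sum fun i _ => Nat.mul_le_mul_left _ (hb i))
    · linarith [hwx k]
end

section
/- Let n ∈ {1, 2, 3, 4, 6}, let m be a positive integer, and set t = 1 − 1/m. Let k be a nonnegative integer with ⌊(n+1)t⌋ ≤ k ≤ n. Then: (i) k/n ≥ t; (ii) if m ≥ 7 (equivalently t ≥ 6/7), then k = n; (iii) if m = 5 (i.e., t = 4/5), then k/n = 5/6 or k/n = 1. -/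
/-!
Since `k` is an integer, `⌊(n+1)t⌋ ≤ k` means `(n+1)t < k+1`. Multiplying by `m` turns this into
`(n-k) m < n+1`, that is `(n-k) m ≤ n`, by integrality. Dividing by `nm` gives `1 - k/n ≤ 1/m`,
which is `t ≤ k/n`. If `m ≥ 7 > n`, then `n - k = 0`. If `m = 5`, then `5 (n-k) ≤ n ≤ 6`
leaves only `k = n`, or `n - k = 1` with `n ≥ 5`, hence `n = 6` and `k = 5`.
-/


/-- Arithmetic of coefficients of regular complements: with `n ∈ {1,2,3,4,6}`,
`t = 1 - 1/m`, and `⌊(n+1)t⌋ ≤ k ≤ n`, one has `k/n ≥ t`; if `m ≥ 7` then `k = n`;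
and if `m = 5` then `k/n ∈ {5/6, 1}`. -/
theorem regular_complement_coefficients (n : ℕ) (hn : n ∈ ({1, 2, 3, 4, 6} : Set ℕ))
    (m : ℕ) (hm : 0 < m) (t : ℚ) (ht : t = 1 - 1 / (m : ℚ))
    (k : ℕ) (hk1 : ⌊((n : ℚ) + 1) * t⌋ ≤ (k : ℤ)) (hk2 : k ≤ n) :
    t ≤ (k : ℚ) / (n : ℚ) ∧
    (7 ≤ m → k = n) ∧
    (m = 5 → (k : ℚ) / (n : ℚ) = 5 / 6 ∨ (k : ℚ) / (n : ℚ) = 1) := by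
  have hn' : n = 1 ∨ n = 2 ∨ n = 3 ∨ n = 4 ∨ n = 6 := by simpa using hn
  have hmQ : (0 : ℚ) < m := by exact_mod_cast hm
  have hnQ : (0 : ℚ) < n := by
    have : 0 < n := by omega
    exact_mod_cast this
  have key : n * m ≤ n + k * m := by
    have h1 : ((n : ℚ) + 1) * t < k + 1 := by
      have h := Int.floor_lt.mp (Int.lt_add_one_of_le hk1)
      push_cast at h
      exact h
    have h2 : ((n : ℚ) + 1) * t * m < (k + 1) * m := mul_lt_mul_of_pos_right h1 hmQ
    have htm : t * m = m - 1 := by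
      rw [ht]
      field_simp
    rw [mul_assoc, htm] at h2
    have h3 : (n : ℚ) * m < n + k * m + 1 := by linarith
    have h4 : n * m < n + k * m + 1 := by exact_mod_cast h3
    omega
  refine ⟨?_, fun h7 => ?_, fun h5 => ?_⟩
  · have keyQ : (n : ℚ) * m ≤ n + k * m := by exact_mod_cast key
    rw [ht, le_div_iff₀ hnQ, ← mul_le_mul_iff_of_pos_right hmQ]
    have : (1 - 1 / (m : ℚ)) * n * m = n * m - n := by field_simp
    linarith
  · by_contra hne
    have hlt : k + 1 ≤ n := by omega
    have := Nat.mul_le_mul_right m hlt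
    rw [add_mul] at this
    omega
  · subst h5
    have hcases : (n = 6 ∧ k = 5) ∨ k = n := by omega
    rcases hcases with ⟨rfl, rfl⟩ | rfl
    · left; norm_num
    · right; exact div_self hnQ.ne'
end

section
/- Let p, q, a, b, w be positive integers with p·a = w and q·b = w. Consider the action of the multiplicative group ℂ* on (ℂ*)² given by λ·(x, y) = (λᵖ x, λᵠ y), and note that the curve C = {(x, y) ∈ ℂ* × ℂ* : xᵃ + yᵇ = 0} is invariant under this action. Then the number of orbits of this ℂ*-action on C equals w / lcm(p, q). -/
/-!
Write `p = g p'` and `q = g q'` with `g = gcd(p, q)` and `p'`, `q'` coprime. Then `pa = qb = w`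
forces `a = q' n`, `b = p' n` with `n = w / lcm(p, q)`. The monomial `t = x ^ q' / y ^ p'` is
invariant under the action, and the equation `x ^ a + y ^ b = 0` says exactly that `t ^ n = -1`.
So `t` maps the orbit space to the set of `n`-th roots of `-1`, which has `n` elements
(`card_pow_eq_neg_one`). Bézout's identity for `p'`, `q'` makes this map bijective: it provides a
point of the curve over each `t`, and it shows (`exists_pow_eq_of_coprime`) that two points with
the same `t` differ by some `(μ ^ p', μ ^ q')`, where `μ` is a `g`-th power in `ℂ*`.
-/

/-- In a commutative group, the solutions of `u ^ n = v ^ m` with `m`, `n` coprime are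
parametrized by `μ ↦ (μ ^ m, μ ^ n)`. -/
lemma exists_pow_eq_of_coprime {G : Type*} [CommGroup G] {m n : ℕ} (h : m.Coprime n) {u v : G}
    (huv : u ^ n = v ^ m) : ∃ μ : G, μ ^ m = u ∧ μ ^ n = v := by
  obtain ⟨r, s, hrs⟩ := Nat.isCoprime_iff_coprime.mpr h
  have huv' : u ^ (n : ℤ) = v ^ (m : ℤ) := by simpa using huv
  refine ⟨u ^ r * v ^ s, ?_, ?_⟩
  · rw [← zpow_natCast, mul_zpow, ← zpow_mul, ← zpow_mul, mul_comm s, zpow_mul v, ← huv',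
      ← zpow_mul, ← zpow_add, mul_comm (n : ℤ), hrs, zpow_one]
  · rw [← zpow_natCast, mul_zpow, ← zpow_mul, ← zpow_mul, mul_comm r, zpow_mul u, huv',
      ← zpow_mul, ← zpow_add, mul_comm (m : ℤ), hrs, zpow_one]

lemma exists_units_pow_eq {n : ℕ} (hn : 0 < n) (z : ℂˣ) : ∃ t : ℂˣ, t ^ n = z := by
  obtain ⟨t, ht⟩ := IsAlgClosed.exists_pow_nat_eq (z : ℂ) hn
  have ht0 : t ≠ 0 := by
    rintro rfl
    rw [zero_pow hn.ne'] at ht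
    exact z.ne_zero ht.symm
  exact ⟨Units.mk0 t ht0, Units.ext (by simpa using ht)⟩

/-- The `n`-th roots of `-1` form a torsor under the `n`-th roots of unity. -/
lemma card_pow_eq_neg_one {n : ℕ} (hn : 0 < n) : Nat.card {t : ℂˣ // t ^ n = -1} = n := by
  obtain ⟨t₀, ht₀⟩ := exists_units_pow_eq hn (-1)
  have : NeZero n := ⟨hn.ne'⟩
  have e : {t : ℂˣ // t ^ n = -1} ≃ rootsOfUnity n ℂ :=
    (Equiv.mulRight t₀⁻¹).subtypeEquiv fun t => by
      rw [mem_rootsOfUnity, Equiv.coe_mulRight, mul_pow, inv_pow, ht₀, mul_inv_eq_one]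
  rw [Nat.card_congr e, Complex.card_rootsOfUnity]

lemma curve_iff (m k n : ℕ) (x y : ℂˣ) :
    (x : ℂ) ^ (k * n) + (y : ℂ) ^ (m * n) = 0 ↔ (x ^ k / y ^ m) ^ n = -1 := by
  rw [div_pow, div_eq_iff_eq_mul, ← pow_mul, ← pow_mul, Units.ext_iff, add_eq_zero_iff_eq_neg]
  simp

/-- The number of orbits of the `ℂ*`-action `λ·(x,y) = (λᵖx, λᵠy)` on the curve
`{(x,y) ∈ (ℂ*)² : xᵃ + yᵇ = 0}`, where `pa = qb = w`, equals `w / lcm(p,q)`. -/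
theorem card_orbits_brieskorn_curve (p q a b w : ℕ)
    (hp : 0 < p) (hq : 0 < q) (ha : 0 < a) (hb : 0 < b) (hw : 0 < w)
    (hpa : p * a = w) (hqb : q * b = w) :
    Nat.card (Quot (fun z z' : {z : ℂˣ × ℂˣ // ((z.1 : ℂ)) ^ a + ((z.2 : ℂ)) ^ b = 0} =>
      ∃ lam : ℂˣ, z'.val.1 = lam ^ p * z.val.1 ∧ z'.val.2 = lam ^ q * z.val.2)) =
      w / Nat.lcm p q := by
  obtain ⟨n, hn⟩ : Nat.lcm p q ∣ w := Nat.lcm_dvd ⟨a, hpa.symm⟩ ⟨b, hqb.symm⟩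
  have hlcm : 0 < Nat.lcm p q := Nat.lcm_pos hp hq
  have hn0 : 0 < n := Nat.pos_of_ne_zero (by rintro rfl; omega)
  have hcard : w / Nat.lcm p q = n := by rw [hn, Nat.mul_div_cancel_left _ hlcm]
  rw [hcard]
  obtain ⟨g, m, k, hg, hmk, rfl, rfl⟩ := Nat.exists_coprime' (m := p) (n := q)
    (Nat.gcd_pos_of_pos_left q hp)
  have hlcm_eq : Nat.lcm (m * g) (k * g) = m * k * g := by
    rw [Nat.lcm_mul_right, hmk.lcm_eq_mul]
  rw [hlcm_eq] at hn
  obtain rfl : a = k * n := Nat.eq_of_mul_eq_mul_left hp (by rw [hpa, hn]; ring)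
  obtain rfl : b = m * n := Nat.eq_of_mul_eq_mul_left hq (by rw [hqb, hn]; ring)
  refine Eq.trans (Nat.card_congr (Equiv.ofBijective (Quot.lift
    (fun z => ⟨z.val.1 ^ k / z.val.2 ^ m, (curve_iff m k n _ _).mp z.2⟩) ?_) ⟨?_, ?_⟩))
    (card_pow_eq_neg_one hn0)
  · rintro ⟨⟨x, y⟩, h⟩ ⟨⟨x', y'⟩, h'⟩ ⟨l, hx, hy⟩
    dsimp only at hx hy
    subst hx hy
    apply Subtype.ext
    have he : (l ^ (k * g)) ^ m = (l ^ (m * g)) ^ k := by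
      rw [← pow_mul, ← pow_mul]; congr 1; ring
    simp only [mul_pow, he, mul_div_mul_left_eq_div]
  · rintro ⟨⟨⟨x, y⟩, h⟩⟩ ⟨⟨⟨x', y'⟩, h'⟩⟩ heq
    have ht : x ^ k / y ^ m = x' ^ k / y' ^ m := congrArg Subtype.val heq
    have huv : (x' / x) ^ k = (y' / y) ^ m := by
      rw [div_eq_div_iff_mul_eq_mul] at ht
      rw [div_pow, div_pow, div_eq_div_iff_mul_eq_mul, ← ht, mul_comm]
    obtain ⟨μ, hμx, hμy⟩ := exists_pow_eq_of_coprime hmk huv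
    obtain ⟨l, rfl⟩ := exists_units_pow_eq hg μ
    refine Quot.sound ⟨l, ?_, ?_⟩
    · change x' = l ^ (m * g) * x
      rw [mul_comm m, pow_mul, hμx, div_mul_cancel]
    · change y' = l ^ (k * g) * y
      rw [mul_comm k, pow_mul, hμy, div_mul_cancel]
  · rintro ⟨t, ht⟩
    obtain ⟨r, s, hrs⟩ := Nat.isCoprime_iff_coprime.mpr hmk
    -- The Bézout relation `r * m + s * k = 1` makes `(t ^ s, t ^ (-r))` a point over `t`.
    have hst : (t ^ s) ^ k / (t ^ (-r)) ^ m = t := by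
      rw [← zpow_natCast, ← zpow_natCast, ← zpow_mul, ← zpow_mul, div_eq_mul_inv, ← zpow_sub,
        show s * k - -r * m = 1 by linarith, zpow_one]
    exact ⟨Quot.mk _ ⟨(t ^ s, t ^ (-r)), (curve_iff m k n _ _).mpr (by rw [hst, ht])⟩,
      Subtype.ext hst⟩
end
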